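/- arXiv:1505.04000 — 2 statements merged into one kernel-verified Lean document; each statement's English description precedes it below -/
import Mathlib

section
/- Let J and L be real symmetric positive definite 3×3 matrices and k₁ > 0, k₂ > 0, α > 0, λ > 0. Let w₁, w₂, w₃ : ℝ → ℝ³ and w₄ : ℝ → ℝ be differentiable functions satisfying w₁' = (1/2)w₂, J w₂' = −L(k₁ w₁ + (1/2) k₂ α λ w₃), w₃' = (1/2)w₂ − α λ w₃, and w₄' = −α λ w₄. Then the function V₃(t) = k₁ w₁(t)ᵀ L w₁(t) + (1/2) w₂(t)ᵀ J w₂(t) + (1/2) k₂ α λ w₃(t)ᵀ L w₃(t) + (1/2) w₄(t)² is differentiable with V₃'(t) = −k₂ α² λ² w₃(t)ᵀ L w₃(t) − α λ w₄(t)² for all t. -/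
open Matrix

/-!
For a symmetric matrix `A`, the derivative of `wᵀ A w` along a curve `w` is `2 wᵀ A w'`.
Hence the `w₁`-term of `V₃` contributes `k₁ w₂ᵀ L w₁` and the `w₃`-term contributes
`(1/2) k₂ α λ w₂ᵀ L w₃` besides its dissipation. The kinetic term `(1/2) w₂ᵀ J w₂` contributes
`w₂ᵀ J w₂'`, which the equation for `J w₂'` makes the negative of these two powers, so that only
the dissipation of `w₃` and `w₄` remains.
-/

section QuadraticForm

variable {m n R : Type*} [Fintype n]

theorem dotProduct_mulVec_comm_of_isSymm [CommSemiring R] {A : Matrix n n R} (hA : A.IsSymm)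
    (u v : n → R) : u ⬝ᵥ (A *ᵥ v) = v ⬝ᵥ (A *ᵥ u) := by
  rw [← dotProduct_transpose_mulVec, hA.eq]

variable {𝕜 : Type*} [NontriviallyNormedField 𝕜] {t : 𝕜}

theorem hasDerivAt_dotProduct [NormedRing R] [NormedAlgebra 𝕜 R] {u v : 𝕜 → n → R}
    {u' v' : n → R} (hu : HasDerivAt u u' t) (hv : HasDerivAt v v' t) :
    HasDerivAt (fun s => u s ⬝ᵥ v s) (u' ⬝ᵥ v t + u t ⬝ᵥ v') t := by
  simp only [dotProduct, ← Finset.sum_add_distrib]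
  exact .fun_sum fun i _ => (hasDerivAt_pi.1 hu i).mul (hasDerivAt_pi.1 hv i)

theorem hasDerivAt_const_mulVec [Finite m] [NormedRing R] [NormedAlgebra 𝕜 R]
    (A : Matrix m n R) {v : 𝕜 → n → R} {v' : n → R} (hv : HasDerivAt v v' t) :
    HasDerivAt (fun s => A *ᵥ v s) (A *ᵥ v') t :=
  hasDerivAt_pi.2 fun i => .fun_sum fun j _ => (hasDerivAt_pi.1 hv j).const_mul (A i j)

theorem hasDerivAt_dotProduct_mulVec_self [NormedCommRing R] [NormedAlgebra 𝕜 R]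
    {A : Matrix n n R} (hA : A.IsSymm) {w : 𝕜 → n → R} {w' : n → R} (hw : HasDerivAt w w' t) :
    HasDerivAt (fun s => w s ⬝ᵥ (A *ᵥ w s)) (2 * (w t ⬝ᵥ (A *ᵥ w'))) t := by
  convert hasDerivAt_dotProduct hw (hasDerivAt_const_mulVec A hw) using 1
  rw [dotProduct_mulVec_comm_of_isSymm hA w', two_mul]

end QuadraticForm

theorem lyapunov_derivative_output_feedback_general
    {𝕜 n : Type*} [NontriviallyNormedField 𝕜] [NeZero (2 : 𝕜)] [Fintype n]
    {J L : Matrix n n 𝕜} (hJ : J.IsSymm) (hL : L.IsSymm) (k₁ k₂ α lam : 𝕜)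
    {w₁ w₂ w₃ : 𝕜 → n → 𝕜} {w₂' : n → 𝕜} {w₄ : 𝕜 → 𝕜} {t : 𝕜}
    (hw₁ : HasDerivAt w₁ ((1 / 2 : 𝕜) • w₂ t) t)
    (hw₂ : HasDerivAt w₂ w₂' t)
    (hw₂' : J *ᵥ w₂' = -(L *ᵥ (k₁ • w₁ t + ((1 / 2) * k₂ * α * lam) • w₃ t)))
    (hw₃ : HasDerivAt w₃ ((1 / 2 : 𝕜) • w₂ t - (α * lam) • w₃ t) t)
    (hw₄ : HasDerivAt w₄ (-(α * lam) * w₄ t) t) :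
    HasDerivAt
      (fun t => k₁ * (w₁ t ⬝ᵥ (L *ᵥ w₁ t)) + (1 / 2) * (w₂ t ⬝ᵥ (J *ᵥ w₂ t))
        + (1 / 2) * k₂ * α * lam * (w₃ t ⬝ᵥ (L *ᵥ w₃ t)) + (1 / 2) * (w₄ t) ^ 2)
      (-(k₂ * α ^ 2 * lam ^ 2 * (w₃ t ⬝ᵥ (L *ᵥ w₃ t))) - α * lam * (w₄ t) ^ 2) t := by
  have deriv_w₁_term : HasDerivAt (fun t => k₁ * (w₁ t ⬝ᵥ (L *ᵥ w₁ t)))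
      (k₁ * (w₂ t ⬝ᵥ (L *ᵥ w₁ t))) t := by
    refine ((hasDerivAt_dotProduct_mulVec_self hL hw₁).const_mul k₁).congr_deriv ?_
    rw [mulVec_smul, dotProduct_smul, dotProduct_mulVec_comm_of_isSymm hL (w₁ t), smul_eq_mul]
    field
  have deriv_w₂_term : HasDerivAt (fun t => (1 / 2) * (w₂ t ⬝ᵥ (J *ᵥ w₂ t)))
      (-(k₁ * (w₂ t ⬝ᵥ (L *ᵥ w₁ t))) - (1 / 2) * k₂ * α * lam * (w₂ t ⬝ᵥ (L *ᵥ w₃ t))) t := by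
    refine ((hasDerivAt_dotProduct_mulVec_self hJ hw₂).const_mul (1 / 2)).congr_deriv ?_
    simp only [hw₂', mulVec_add, mulVec_smul, dotProduct_neg, dotProduct_add, dotProduct_smul,
      smul_eq_mul]
    field
  have deriv_w₃_term : HasDerivAt (fun t => (1 / 2) * k₂ * α * lam * (w₃ t ⬝ᵥ (L *ᵥ w₃ t)))
      ((1 / 2) * k₂ * α * lam * (w₂ t ⬝ᵥ (L *ᵥ w₃ t))
        - k₂ * α ^ 2 * lam ^ 2 * (w₃ t ⬝ᵥ (L *ᵥ w₃ t))) t := by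
    refine ((hasDerivAt_dotProduct_mulVec_self hL hw₃).const_mul
      ((1 / 2) * k₂ * α * lam)).congr_deriv ?_
    simp only [mulVec_sub, mulVec_smul, dotProduct_sub, dotProduct_smul, smul_eq_mul,
      dotProduct_mulVec_comm_of_isSymm hL (w₃ t) (w₂ t)]
    field
  have deriv_w₄_term : HasDerivAt (fun t => (1 / 2) * (w₄ t) ^ 2) (-(α * lam * (w₄ t) ^ 2)) t := by
    refine ((hw₄.fun_pow 2).const_mul (1 / 2)).congr_deriv ?_
    push_cast
    field
  exact (((deriv_w₁_term.add deriv_w₂_term).add deriv_w₃_term).add deriv_w₄_term).congr_deriv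
    (by ring)

/-- For the limit linear system of the averaged output-feedback closed loop
`ẇ₁ = (1/2)w₂`, `J ẇ₂ = −L(k₁w₁ + (1/2)k₂αλw₃)`, `ẇ₃ = (1/2)w₂ − αλw₃`, `ẇ₄ = −αλw₄`,
the Lyapunov function
`V₃ = k₁ w₁ᵀLw₁ + (1/2) w₂ᵀJw₂ + (1/2)k₂αλ w₃ᵀLw₃ + (1/2) w₄²` is differentiable along
solutions with derivative `V₃' = −k₂α²λ² w₃ᵀLw₃ − αλ w₄²`. -/
theorem lyapunov_derivative_output_feedback
    (J L : Matrix (Fin 3) (Fin 3) ℝ) (hJ : J.PosDef) (hL : L.PosDef)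
    (k₁ k₂ α lam : ℝ) (hk₁ : 0 < k₁) (hk₂ : 0 < k₂) (hα : 0 < α) (hlam : 0 < lam)
    (w₁ w₂ w₂' w₃ : ℝ → (Fin 3 → ℝ)) (w₄ : ℝ → ℝ)
    (hw₁ : ∀ t, HasDerivAt w₁ ((1/2 : ℝ) • w₂ t) t)
    (hw₂ : ∀ t, HasDerivAt w₂ (w₂' t) t)
    (hw₂' : ∀ t, J *ᵥ w₂' t = -(L *ᵥ (k₁ • w₁ t + ((1/2) * k₂ * α * lam) • w₃ t)))
    (hw₃ : ∀ t, HasDerivAt w₃ ((1/2 : ℝ) • w₂ t - (α * lam) • w₃ t) t)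
    (hw₄ : ∀ t, HasDerivAt w₄ (-(α * lam) * w₄ t) t) :
    ∀ t, HasDerivAt
      (fun t => k₁ * (w₁ t ⬝ᵥ (L *ᵥ w₁ t)) + (1/2) * (w₂ t ⬝ᵥ (J *ᵥ w₂ t))
        + (1/2) * k₂ * α * lam * (w₃ t ⬝ᵥ (L *ᵥ w₃ t)) + (1/2) * (w₄ t) ^ 2)
      (-(k₂ * α ^ 2 * lam ^ 2 * (w₃ t ⬝ᵥ (L *ᵥ w₃ t))) - α * lam * (w₄ t) ^ 2) t :=
  fun t => lyapunov_derivative_output_feedback_general (isHermitian_iff_isSymm.1 hJ.isHermitian)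
    (isHermitian_iff_isSymm.1 hL.isHermitian) k₁ k₂ α lam (hw₁ t) (hw₂ t) (hw₂' t) (hw₃ t) (hw₄ t)
end

section
/- Let J and L₀ be real symmetric positive definite 3×3 matrices, k₁ > 0, k₂ > 0, α > 0, λ > 0, and let L : ℝ → M₃(ℝ) be a matrix-valued function continuous at 0 with L(0) = L₀. For T > 0 define the 10×10 block matrix A_o(T) = [[0, (1/2)I₃, 0, 0], [−k₁ J⁻¹ L(T), 0, −(1/2) k₂ α λ J⁻¹ L(T), 0], [0, (1/2)I₃, −α λ I₃, 0], [0, 0, 0, −α λ]]. Then there exists T* > 0 such that for every 0 < T < T* there exists ε₀ > 0 such that for all 0 < ε ≤ ε₀, every complex eigenvalue of I₁₀ + εT A_o(T) has modulus strictly less than 1; consequently the discrete-time system z(k+1) = (I₁₀ + εT A_o(T)) z(k) is exponentially stable. -/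
open Matrix

/-!
The averaged matrix `A` at `T = 0` is Hurwitz: the block diagonal quadratic form
`V = k₁ q*Lq + ½ w*Jw + ½ k₂ a δ*Lδ + η*η` has derivative `-(k₂ a² δ*Lδ + 2a η*η) ≤ 0` along
`ż = A z`, and an eigenvector on which this derivative vanishes has `δ = 0`, `η = 0`, hence `w = 0`
from the observer row and `q = 0` from the dynamics row. Being Hurwitz is an open condition by upper
hemicontinuity of the spectrum, so it persists for small `T`. For small `h > 0` the Euler map
`1 + h A` then has its spectrum in the open unit disc, and Gelfand's formula gives geometric decay
of its powers.
-/

open Filter Topology Asymptotics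
open scoped ComplexOrder

section BanachAlgebra

/-- An element of a complex algebra is Hurwitz stable if its spectrum lies in the open left
half-plane; for a matrix this is asymptotic stability of `ż = a z`. -/
def IsHurwitzStable {A : Type*} [Ring A] [Algebra ℂ A] (a : A) : Prop :=
  ∀ μ ∈ spectrum ℂ a, μ.re < 0

/-- An element of a complex algebra is Schur stable if its spectrum lies in the open unit disc; for
a matrix this is asymptotic stability of `z (k + 1) = a (z k)`. -/
def IsSchurStable {A : Type*} [Ring A] [Algebra ℂ A] (a : A) : Prop :=
  ∀ μ ∈ spectrum ℂ a, ‖μ‖ < 1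

variable {A : Type*} [NormedRing A] [NormedAlgebra ℂ A] [CompleteSpace A] {a : A}

variable (A) in
lemma isOpen_setOf_isHurwitzStable : IsOpen {a : A | IsHurwitzStable a} :=
  upperHemicontinuous_iff_isOpen_preimage_Iic.mp (upperHemicontinuous_spectrum ℂ A)
    {μ : ℂ | μ.re < 0} (isOpen_lt Complex.continuous_re continuous_const)

lemma norm_one_add_ofReal_mul_lt_one_iff {h : ℝ} (hh : 0 < h) (μ : ℂ) :
    ‖1 + (h : ℂ) * μ‖ < 1 ↔ 2 * μ.re + h * ‖μ‖ ^ 2 < 0 := by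
  have hsq : ‖1 + (h : ℂ) * μ‖ ^ 2 = 1 + h * (2 * μ.re + h * ‖μ‖ ^ 2) := by
    simp only [Complex.sq_norm, Complex.normSq_apply, Complex.add_re, Complex.add_im,
      Complex.one_re, Complex.one_im, Complex.re_ofReal_mul, Complex.im_ofReal_mul]
    ring
  rw [← sq_lt_one_iff₀ (norm_nonneg _), hsq, add_lt_iff_neg_left, ← smul_eq_mul,
    smul_neg_iff_of_pos_left hh]

lemma spectrum_one_add_smul {𝕜 B : Type*} [Field 𝕜] [Ring B] [Algebra 𝕜 B] {c : 𝕜} (hc : c ≠ 0)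
    (b : B) : spectrum 𝕜 (1 + c • b) = (fun μ => 1 + c * μ) '' spectrum 𝕜 b := by
  have h := spectrum.unit_smul_eq_smul b (Units.mk0 c hc)
  rw [Units.smul_mk0] at h
  rw [← map_one (algebraMap 𝕜 B), ← spectrum.singleton_add_eq, h]
  ext
  simp [Set.mem_smul_set, Units.smul_def, eq_neg_add_iff_add_eq]

lemma IsHurwitzStable.eventually_isSchurStable (ha : IsHurwitzStable a) :
    ∀ᶠ h : ℝ in 𝓝[>] 0, IsSchurStable (1 + (h : ℂ) • a) := by
  have hneg : ∀ᶠ h : ℝ in 𝓝 0, ∀ μ ∈ spectrum ℂ a, 2 * μ.re + h * ‖μ‖ ^ 2 < 0 := by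
    refine (spectrum.isCompact a).eventually_forall_of_forall_eventually fun μ hμ => ?_
    have hcont : Continuous fun z : ℝ × ℂ => 2 * z.2.re + z.1 * ‖z.2‖ ^ 2 := by fun_prop
    exact hcont.continuousAt.eventually_lt_const
      (by simpa using mul_neg_of_pos_of_neg two_pos (ha μ hμ))
  filter_upwards [hneg.filter_mono nhdsWithin_le_nhds, self_mem_nhdsWithin] with h hneg hh
  rw [IsSchurStable, spectrum_one_add_smul (Complex.ofReal_ne_zero.mpr (ne_of_gt hh))]
  rintro _ ⟨μ, hμ, rfl⟩
  exact (norm_one_add_ofReal_mul_lt_one_iff hh μ).mpr (hneg μ hμ)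

lemma isBigO_pow_of_spectralRadius_lt {r : NNReal} (hr : spectralRadius ℂ a < r) :
    (fun k : ℕ => a ^ k) =O[atTop] fun k => (r : ℝ) ^ k := by
  refine IsBigO.of_bound 1 ?_
  have hroot := spectrum.pow_nnnorm_pow_one_div_tendsto_nhds_spectralRadius a
  filter_upwards [hroot.eventually_lt_const hr, eventually_gt_atTop 0] with k hk hk0
  have hpow : (‖a ^ k‖₊ : ENNReal) ≤ (r : ENNReal) ^ k := by
    rw [← ENNReal.rpow_natCast, ← ENNReal.rpow_inv_le_iff (by exact_mod_cast hk0), ← one_div]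
    exact hk.le
  rw [one_mul, Real.norm_of_nonneg (by positivity)]
  exact_mod_cast hpow

lemma IsSchurStable.spectralRadius_lt_one (ha : IsSchurStable a) : spectralRadius ℂ a < 1 := by
  cases subsingleton_or_nontrivial A
  · simp
  · exact spectrum.spectralRadius_lt_of_forall_lt a ha

lemma IsSchurStable.exists_norm_pow_le (ha : IsSchurStable a) :
    ∃ c ρ : ℝ, 1 ≤ c ∧ 0 < ρ ∧ ρ < 1 ∧ ∀ k : ℕ, ‖a ^ k‖ ≤ c * ρ ^ k := by
  obtain ⟨ρ, hρ, hρ1⟩ := ENNReal.lt_iff_exists_nnreal_btwn.mp ha.spectralRadius_lt_one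
  have hρ0 : 0 < ρ := by exact_mod_cast pos_of_gt hρ
  obtain ⟨C, hC⟩ := (isBigO_nat_atTop_iff fun k hk => absurd hk (by positivity)).mp
    (isBigO_pow_of_spectralRadius_lt hρ)
  refine ⟨max 1 C, ρ, le_max_left _ _, hρ0, by exact_mod_cast hρ1, fun k => (hC k).trans ?_⟩
  rw [Real.norm_of_nonneg (by positivity)]
  gcongr
  exact le_max_right _ _

end BanachAlgebra

section Matrix

variable {n m 𝕜 : Type*} [RCLike 𝕜]

lemma posDef_fromBlocks_diagonal [Finite n] [Finite m] {A : Matrix n n 𝕜} {D : Matrix m m 𝕜}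
    (hA : A.PosDef) (hD : D.PosDef) : (fromBlocks A 0 0 D).PosDef := by
  classical
  have := Fintype.ofFinite n
  have := Fintype.ofFinite m
  have := hD.isUnit.invertible
  have hsemidef : (fromBlocks A 0 (0 : Matrix n m 𝕜)ᴴ D).PosSemidef :=
    (PosDef.fromBlocks₂₂ A 0 hD).mpr (by simpa using hA.posSemidef)
  rw [conjTranspose_zero] at hsemidef
  exact hsemidef.posDef_iff_isUnit.mpr (isUnit_fromBlocks_zero₂₁.mpr ⟨hA.isUnit, hD.isUnit⟩)

open scoped MatrixOrder in
lemma posDef_map_ofReal [Finite n] {M : Matrix n n ℝ} (hM : M.PosDef) :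
    (M.map (algebraMap ℝ 𝕜)).PosDef := by
  classical
  have := Fintype.ofFinite n
  have hunit : IsUnit (M.map (algebraMap ℝ 𝕜)) := hM.isUnit.map (algebraMap ℝ 𝕜).mapMatrix
  obtain ⟨B, rfl⟩ := CStarAlgebra.nonneg_iff_eq_star_mul_self.mp hM.posSemidef.nonneg
  have hmap : (star B * B).map (algebraMap ℝ 𝕜) =
      (B.map (algebraMap ℝ 𝕜))ᴴ * B.map (algebraMap ℝ 𝕜) := by
    rw [Matrix.map_mul, star_eq_conjTranspose, conjTranspose_map _ fun x => by simp]
  rw [hmap] at hunit ⊢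
  exact (posSemidef_conjTranspose_mul_self _).posDef_iff_isUnit.mpr hunit

variable [Fintype n] [DecidableEq n]

lemma isOpen_setOf_isHurwitzStable_matrix : IsOpen {M : Matrix n n ℂ | IsHurwitzStable M} := by
  open scoped Matrix.Norms.L2Operator in
  exact isOpen_setOf_isHurwitzStable (Matrix n n ℂ)

lemma eventually_isSchurStable_matrix {M : Matrix n n ℂ} (hM : IsHurwitzStable M) :
    ∀ᶠ h : ℝ in 𝓝[>] 0, IsSchurStable (1 + (h : ℂ) • M) := by
  open scoped Matrix.Norms.L2Operator in
  exact hM.eventually_isSchurStable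

/-- Exponential stability of `z (k + 1) = M z k` in the Euclidean norm. -/
def IsExponentiallyStable (M : Matrix n n ℝ) : Prop :=
  ∃ c ρ : ℝ, 1 ≤ c ∧ 0 < ρ ∧ ρ < 1 ∧ ∀ (z : EuclideanSpace ℝ n) (k : ℕ),
    ‖toEuclideanCLM (𝕜 := ℝ) (M ^ k) z‖ ≤ c * ρ ^ k * ‖z‖

open scoped Matrix.Norms.L2Operator in
lemma norm_toEuclideanCLM_le_norm_map_ofReal (M : Matrix n n ℝ) (z : EuclideanSpace ℝ n) :
    ‖toEuclideanCLM (𝕜 := ℝ) M z‖ ≤ ‖M.map (algebraMap ℝ 𝕜)‖ * ‖z‖ := by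
  have h := (M.map (algebraMap ℝ 𝕜)).l2_opNorm_mulVec
    (WithLp.toLp 2 fun i => algebraMap ℝ 𝕜 (z i))
  have hMz : M.map (algebraMap ℝ 𝕜) *ᵥ (fun i => algebraMap ℝ 𝕜 (z i)) =
      fun i => algebraMap ℝ 𝕜 ((M *ᵥ z.ofLp) i) :=
    funext fun i => ((algebraMap ℝ 𝕜).map_mulVec M z.ofLp i).symm
  rw [hMz] at h
  simpa [EuclideanSpace.norm_eq, ofLp_toEuclideanCLM] using h

open scoped Matrix.Norms.L2Operator in
lemma IsSchurStable.isExponentiallyStable {M : Matrix n n ℝ}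
    (hM : IsSchurStable (M.map (algebraMap ℝ ℂ))) : IsExponentiallyStable M := by
  obtain ⟨c, ρ, hc, hρ0, hρ1, hpow⟩ := hM.exists_norm_pow_le
  refine ⟨c, ρ, hc, hρ0, hρ1, fun z k => ?_⟩
  have hmap : (M ^ k).map (algebraMap ℝ ℂ) = M.map (algebraMap ℝ ℂ) ^ k :=
    map_pow (algebraMap ℝ ℂ).mapMatrix M k
  calc ‖toEuclideanCLM (𝕜 := ℝ) (M ^ k) z‖
      ≤ ‖(M ^ k).map (algebraMap ℝ ℂ)‖ * ‖z‖ := norm_toEuclideanCLM_le_norm_map_ofReal _ z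
    _ ≤ c * ρ ^ k * ‖z‖ := by rw [hmap]; gcongr; exact hpow k

lemma eventually_isSchurStable_and_isExponentiallyStable {M : Matrix n n ℝ}
    (hM : IsHurwitzStable (M.map (algebraMap ℝ ℂ))) :
    ∀ᶠ h : ℝ in 𝓝[>] 0,
      IsSchurStable ((1 + h • M).map (algebraMap ℝ ℂ)) ∧ IsExponentiallyStable (1 + h • M) := by
  filter_upwards [eventually_isSchurStable_matrix hM] with h hh
  have hmap : (1 + h • M).map (algebraMap ℝ ℂ) = 1 + (h : ℂ) • M.map (algebraMap ℝ ℂ) := by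
    simp [Matrix.map_add, Matrix.map_smul']
  rw [← hmap] at hh
  exact ⟨hh, hh.isExponentiallyStable⟩

/-- The hypothesis `hobs` is the Hautus observability test for the pair `(M, Q)`; it makes up for
`Q` being only semidefinite. -/
lemma isHurwitzStable_of_lyapunov {M P Q : Matrix n n ℂ} (hP : P.PosDef) (hQ : Q.PosSemidef)
    (hPQ : P * M + Mᴴ * P = -Q)
    (hobs : ∀ (μ : ℂ) (v : n → ℂ), M *ᵥ v = μ • v → Q *ᵥ v = 0 → v = 0) :
    IsHurwitzStable M := by
  intro μ hμ
  rw [← Matrix.spectrum_toLin', ← Module.End.hasEigenvalue_iff_mem_spectrum] at hμ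
  obtain ⟨v, hv⟩ := hμ.exists_hasEigenvector
  have hMv : M *ᵥ v = μ • v := hv.apply_eq_smul
  have henergy : (2 * μ.re : ℂ) * (star v ⬝ᵥ P *ᵥ v) = -(star v ⬝ᵥ Q *ᵥ v) :=
    calc (2 * μ.re : ℂ) * (star v ⬝ᵥ P *ᵥ v)
        = star v ⬝ᵥ P *ᵥ (M *ᵥ v) + star (M *ᵥ v) ⬝ᵥ P *ᵥ v := by
          have hre : (2 * μ.re : ℂ) = μ + star μ := by simpa using (Complex.add_conj μ).symm
          rw [hMv, mulVec_smul, dotProduct_smul, star_smul, smul_dotProduct, hre]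
          simp only [smul_eq_mul, add_mul]
      _ = star v ⬝ᵥ (P * M + Mᴴ * P) *ᵥ v := by
          rw [add_mulVec, dotProduct_add, star_mulVec, ← dotProduct_mulVec, mulVec_mulVec,
            mulVec_mulVec]
      _ = -(star v ⬝ᵥ Q *ᵥ v) := by rw [hPQ, neg_mulVec, dotProduct_neg]
  by_contra! hre
  refine hv.2 (hobs μ v hMv ((hQ.dotProduct_mulVec_zero_iff v).mp
    (le_antisymm ?_ (hQ.dotProduct_mulVec_nonneg v))))
  rw [← neg_nonneg, ← henergy]
  exact mul_nonneg (by exact_mod_cast mul_nonneg zero_le_two hre) (hP.dotProduct_mulVec_pos hv.2).le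

lemma map_nonsing_inv {R S : Type*} [Field R] [Field S] (f : R →+* S) (M : Matrix n n R) :
    M⁻¹.map f = (M.map f)⁻¹ := by
  have hdet : (M.map f).det = f M.det := (f.map_det M).symm
  have hadj : (M.map f).adjugate = M.adjugate.map f := (f.map_adjugate M).symm
  ext i j
  simp [inv_def, hdet, hadj, Ring.inverse_eq_inv']

end Matrix

section ClosedLoop

variable {n : Type*} (m : Type*) [DecidableEq m]

/-- The matrix `A_o` of the averaged output-feedback closed loop with states `(q, w, δ, η)`, for an
arbitrary dimension `n` of the attitude and `m` of the decoupled observer mode, with `a = α λ`. -/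
noncomputable def averagedClosedLoop [Fintype n] [DecidableEq n] {R : Type*} [Field R]
    (J L : Matrix n n R) (k₁ k₂ a : R) : Matrix ((n ⊕ n) ⊕ (n ⊕ m)) ((n ⊕ n) ⊕ (n ⊕ m)) R :=
  fromBlocks
    (fromBlocks 0 ((1 / 2 : R) • 1) (-(k₁ • (J⁻¹ * L))) 0)
    (fromBlocks 0 0 (-((1 / 2 * k₂ * a) • (J⁻¹ * L))) 0)
    (fromBlocks 0 ((1 / 2 : R) • 1) 0 0)
    (fromBlocks (-(a • 1)) 0 0 (-(a • 1)))

/-- The matrix of the Lyapunov form `V` for `averagedClosedLoop`. -/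
noncomputable def averagedLyapunov (J L : Matrix n n ℂ) (k₁ k₂ a : ℂ) :
    Matrix ((n ⊕ n) ⊕ (n ⊕ m)) ((n ⊕ n) ⊕ (n ⊕ m)) ℂ :=
  fromBlocks (fromBlocks (k₁ • L) 0 0 ((1 / 2 : ℂ) • J)) 0 0
    (fromBlocks ((1 / 2 * k₂ * a) • L) 0 0 1)

/-- The matrix of the quadratic form `-dV/dt`, for the Lyapunov form `V` of `averagedLyapunov`
along `ż = averagedClosedLoop m J L k₁ k₂ a *ᵥ z`; it vanishes on the `(q, w)` block. -/
def averagedDissipation (L : Matrix n n ℂ) (k₂ a : ℂ) :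
    Matrix ((n ⊕ n) ⊕ (n ⊕ m)) ((n ⊕ n) ⊕ (n ⊕ m)) ℂ :=
  fromBlocks 0 0 0 (fromBlocks ((k₂ * a ^ 2) • L) 0 0 ((2 * a) • 1))

lemma posDef_averagedLyapunov [Finite n] [Finite m] {J L : Matrix n n ℂ} {k₁ k₂ a : ℂ}
    (hJ : J.PosDef) (hL : L.PosDef) (hk₁ : 0 < k₁) (hk₂ : 0 < k₂) (ha : 0 < a) :
    (averagedLyapunov m J L k₁ k₂ a).PosDef :=
  posDef_fromBlocks_diagonal
    (posDef_fromBlocks_diagonal (hL.smul hk₁) (hJ.smul (by positivity)))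
    (posDef_fromBlocks_diagonal (hL.smul (by positivity)) .one)

lemma posSemidef_averagedDissipation [Finite n] [Finite m] {L : Matrix n n ℂ} {k₂ a : ℂ}
    (hL : L.PosDef) (hk₂ : 0 < k₂) (ha : 0 < a) : (averagedDissipation m L k₂ a).PosSemidef := by
  classical
  have := Fintype.ofFinite n
  have := Fintype.ofFinite m
  have hD : (fromBlocks ((k₂ * a ^ 2) • L) 0 0 ((2 * a) • (1 : Matrix m m ℂ))).PosDef :=
    posDef_fromBlocks_diagonal (hL.smul (by positivity)) (PosDef.one.smul (by positivity))
  have := hD.isUnit.invertible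
  simpa [averagedDissipation] using (PosDef.fromBlocks₂₂ (0 : Matrix (n ⊕ n) (n ⊕ n) ℂ) 0 hD).mpr
    (by simpa using PosSemidef.zero)

variable [Fintype n] [DecidableEq n]

lemma averagedClosedLoop_map {R S : Type*} [Field R] [Field S] (f : R →+* S) (J L : Matrix n n R)
    (k₁ k₂ a : R) : (averagedClosedLoop m J L k₁ k₂ a).map f =
      averagedClosedLoop m (J.map f) (L.map f) (f k₁) (f k₂) (f a) := by
  simp [averagedClosedLoop, fromBlocks_map, Matrix.map_neg, Matrix.map_smul', Matrix.map_mul,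
    map_nonsing_inv, map_ofNat f 2]

lemma continuous_averagedClosedLoop {R : Type*} [Field R] [TopologicalSpace R]
    [IsTopologicalRing R] (J : Matrix n n R) (k₁ k₂ a : R) :
    Continuous fun L => averagedClosedLoop m J L k₁ k₂ a := by
  unfold averagedClosedLoop
  refine .matrix_fromBlocks ?_ ?_ ?_ ?_ <;> refine .matrix_fromBlocks ?_ ?_ ?_ ?_ <;> fun_prop

variable [Fintype m] {J L : Matrix n n ℂ} {k₁ k₂ a : ℂ}

lemma averagedLyapunov_mul_add_conjTranspose_mul (hJ : J.IsHermitian) (hJunit : IsUnit J)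
    (hL : L.IsHermitian) (hk₁ : star k₁ = k₁) (hk₂ : star k₂ = k₂) (ha : star a = a) :
    averagedLyapunov m J L k₁ k₂ a * averagedClosedLoop m J L k₁ k₂ a +
      (averagedClosedLoop m J L k₁ k₂ a)ᴴ * averagedLyapunov m J L k₁ k₂ a =
      -averagedDissipation m L k₂ a := by
  have hdet : IsUnit J.det := J.isUnit_iff_isUnit_det.mp hJunit
  have hJL : J * (J⁻¹ * L) = L := mul_nonsing_inv_cancel_left _ _ hdet
  have hLJ : L * J⁻¹ * J = L := nonsing_inv_mul_cancel_right _ _ hdet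
  have hδ : -(a • (2⁻¹ * k₂ * a) • L) + -((2⁻¹ * k₂ * a) • a • L) = -((k₂ * a ^ 2) • L) := by
    module
  have hη : -(a • (1 : Matrix m m ℂ)) + -(a • 1) = -((2 * a) • 1) := by module
  simp [averagedLyapunov, averagedClosedLoop, averagedDissipation, fromBlocks_multiply,
    fromBlocks_conjTranspose, fromBlocks_add, fromBlocks_neg, hJ.inv.eq, hL.eq, hJL, hLJ,
    hk₁, hk₂, ha, hδ, hη]

lemma eq_zero_of_averagedClosedLoop_mulVec_eq_smul (hJ : IsUnit J) (hL : IsUnit L) (hk₁ : k₁ ≠ 0)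
    (hk₂ : k₂ ≠ 0) (ha : a ≠ 0) {μ : ℂ} {v : (n ⊕ n) ⊕ (n ⊕ m) → ℂ}
    (hv : averagedClosedLoop m J L k₁ k₂ a *ᵥ v = μ • v)
    (hQv : averagedDissipation m L k₂ a *ᵥ v = 0) : v = 0 := by
  obtain ⟨q, w, δ, η, rfl⟩ : ∃ q w δ η, v = Sum.elim (Sum.elim q w) (Sum.elim δ η) :=
    ⟨v ∘ .inl ∘ .inl, v ∘ .inl ∘ .inr, v ∘ .inr ∘ .inl, v ∘ .inr ∘ .inr, by
      ext ((_ | _) | (_ | _)) <;> rfl⟩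
  have hη : η = 0 := funext fun i => by
    simpa [averagedDissipation, fromBlocks_mulVec, smul_mulVec, ha] using
      congr_fun hQv (.inr (.inr i))
  have hδ : δ = 0 := mulVec_injective_of_isUnit hL <| funext fun i => by
    simpa [averagedDissipation, fromBlocks_mulVec, smul_mulVec, hk₂, ha] using
      congr_fun hQv (.inr (.inl i))
  have hw : w = 0 := funext fun i => by
    simpa [averagedClosedLoop, fromBlocks_mulVec, smul_mulVec, neg_mulVec, hδ] using
      congr_fun hv (.inr (.inl i))
  have hJL : IsUnit (J⁻¹ * L) := (isUnit_nonsing_inv_iff.mpr hJ).mul hL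
  have hq : q = 0 := mulVec_injective_of_isUnit hJL <| funext fun i => by
    simpa [averagedClosedLoop, fromBlocks_mulVec, smul_mulVec, neg_mulVec, hδ, hw, hk₁] using
      congr_fun hv (.inl (.inr i))
  simp [hq, hw, hδ, hη]

lemma isHurwitzStable_averagedClosedLoop (hJ : J.PosDef) (hL : L.PosDef) (hk₁ : 0 < k₁)
    (hk₂ : 0 < k₂) (ha : 0 < a) : IsHurwitzStable (averagedClosedLoop m J L k₁ k₂ a) :=
  isHurwitzStable_of_lyapunov (posDef_averagedLyapunov m hJ hL hk₁ hk₂ ha)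
    (posSemidef_averagedDissipation m hL hk₂ ha)
    (averagedLyapunov_mul_add_conjTranspose_mul m hJ.isHermitian hJ.isUnit hL.isHermitian
      hk₁.le.isSelfAdjoint hk₂.le.isSelfAdjoint ha.le.isSelfAdjoint)
    fun _ _ => eq_zero_of_averagedClosedLoop_mulVec_eq_smul m hJ.isUnit hL.isUnit hk₁.ne' hk₂.ne'
      ha.ne'

lemma eventually_isHurwitzStable_averagedClosedLoop {J : Matrix n n ℝ} {L : ℝ → Matrix n n ℝ}
    (hJ : J.PosDef) (hL₀ : (L 0).PosDef) (hL : ContinuousAt L 0) {k₁ k₂ a : ℝ}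
    (hk₁ : 0 < k₁) (hk₂ : 0 < k₂) (ha : 0 < a) :
    ∀ᶠ T in 𝓝 0,
      IsHurwitzStable ((averagedClosedLoop m J (L T) k₁ k₂ a).map (algebraMap ℝ ℂ)) := by
  have hzero : IsHurwitzStable ((averagedClosedLoop m J (L 0) k₁ k₂ a).map (algebraMap ℝ ℂ)) := by
    rw [averagedClosedLoop_map]
    exact isHurwitzStable_averagedClosedLoop m (posDef_map_ofReal hJ) (posDef_map_ofReal hL₀)
      (Complex.zero_lt_real.mpr hk₁) (Complex.zero_lt_real.mpr hk₂) (Complex.zero_lt_real.mpr ha)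
  have hcont : Continuous fun L' => (averagedClosedLoop m J L' k₁ k₂ a).map (algebraMap ℝ ℂ) :=
    (continuous_averagedClosedLoop m J k₁ k₂ a).matrix_map Complex.continuous_ofReal
  exact (hcont.continuousAt.comp hL).eventually
    (isOpen_setOf_isHurwitzStable_matrix.mem_nhds hzero)

theorem averaged_output_feedback_stability_general {J : Matrix n n ℝ} {L : ℝ → Matrix n n ℝ}
    (hJ : J.PosDef) (hL₀ : (L 0).PosDef) (hL : ContinuousAt L 0) {k₁ k₂ a : ℝ}
    (hk₁ : 0 < k₁) (hk₂ : 0 < k₂) (ha : 0 < a) :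
    ∃ Tstar : ℝ, 0 < Tstar ∧ ∀ T : ℝ, 0 < T → T < Tstar →
      ∃ ε₀ : ℝ, 0 < ε₀ ∧ ∀ ε : ℝ, 0 < ε → ε ≤ ε₀ →
        IsSchurStable ((1 + (ε * T) • averagedClosedLoop m J (L T) k₁ k₂ a).map (algebraMap ℝ ℂ)) ∧
        IsExponentiallyStable (1 + (ε * T) • averagedClosedLoop m J (L T) k₁ k₂ a) := by
  obtain ⟨Tstar, hTstar, hHurwitz⟩ := Metric.eventually_nhds_iff.mp
    (eventually_isHurwitzStable_averagedClosedLoop m hJ hL₀ hL hk₁ hk₂ ha)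
  refine ⟨Tstar, hTstar, fun T hT hTT => ?_⟩
  have hT_dist : dist T 0 < Tstar := by rwa [Real.dist_0_eq_abs, abs_of_pos hT]
  obtain ⟨h₀, hh₀, hstable⟩ := mem_nhdsGT_iff_exists_Ioc_subset.mp
    (eventually_isSchurStable_and_isExponentiallyStable (hHurwitz hT_dist))
  exact ⟨h₀ / T, div_pos hh₀ hT, fun ε hε hεT =>
    hstable ⟨mul_pos hε hT, (le_div_iff₀ hT).mp hεT⟩⟩

end ClosedLoop

/-- Theorem 2 of the paper, averaged output-feedback system. With `J, L₀`
symmetric positive definite, `k₁, k₂, α, λ > 0`, and `L : ℝ → M₃(ℝ)` continuous at `0`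
with `L 0 = L₀`, set
`A_o(T) = [[0, (1/2)I₃, 0, 0], [−k₁J⁻¹L(T), 0, −(1/2)k₂αλJ⁻¹L(T), 0],
[0, (1/2)I₃, −αλI₃, 0], [0, 0, 0, −αλ]]`. Then there is `T* > 0` such that for every
`0 < T < T*` there is `ε₀ > 0` such that for all `0 < ε ≤ ε₀` every complex eigenvalue of
`I₁₀ + εT A_o(T)` has modulus `< 1`, and the discrete-time system
`z(k+1) = (I₁₀ + εT A_o(T)) z(k)` is exponentially stable. -/
theorem averaged_output_feedback_stability
    (J L₀ : Matrix (Fin 3) (Fin 3) ℝ) (hJ : J.PosDef) (hL₀ : L₀.PosDef)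
    (k₁ k₂ α lam : ℝ) (hk₁ : 0 < k₁) (hk₂ : 0 < k₂) (hα : 0 < α) (hlam : 0 < lam)
    (L : ℝ → Matrix (Fin 3) (Fin 3) ℝ) (hLcont : ContinuousAt L 0) (hL0 : L 0 = L₀)
    (Ao : ℝ → Matrix ((Fin 3 ⊕ Fin 3) ⊕ (Fin 3 ⊕ Fin 1)) ((Fin 3 ⊕ Fin 3) ⊕ (Fin 3 ⊕ Fin 1)) ℝ)
    (hAo : ∀ T, Ao T = Matrix.fromBlocks
      (Matrix.fromBlocks
        (0 : Matrix (Fin 3) (Fin 3) ℝ) ((1/2 : ℝ) • (1 : Matrix (Fin 3) (Fin 3) ℝ))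
        (-(k₁ • (J⁻¹ * L T))) (0 : Matrix (Fin 3) (Fin 3) ℝ))
      (Matrix.fromBlocks
        (0 : Matrix (Fin 3) (Fin 3) ℝ) (0 : Matrix (Fin 3) (Fin 1) ℝ)
        (-(((1/2) * k₂ * α * lam) • (J⁻¹ * L T))) (0 : Matrix (Fin 3) (Fin 1) ℝ))
      (Matrix.fromBlocks
        (0 : Matrix (Fin 3) (Fin 3) ℝ) ((1/2 : ℝ) • (1 : Matrix (Fin 3) (Fin 3) ℝ))
        (0 : Matrix (Fin 1) (Fin 3) ℝ) (0 : Matrix (Fin 1) (Fin 3) ℝ))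
      (Matrix.fromBlocks
        (-((α * lam) • (1 : Matrix (Fin 3) (Fin 3) ℝ))) (0 : Matrix (Fin 3) (Fin 1) ℝ)
        (0 : Matrix (Fin 1) (Fin 3) ℝ) (-((α * lam) • (1 : Matrix (Fin 1) (Fin 1) ℝ))))) :
    ∃ Tstar : ℝ, 0 < Tstar ∧ ∀ T : ℝ, 0 < T → T < Tstar →
      ∃ ε₀ : ℝ, 0 < ε₀ ∧ ∀ ε : ℝ, 0 < ε → ε ≤ ε₀ →
        (∀ μ ∈ spectrum ℂ
            (((1 : Matrix ((Fin 3 ⊕ Fin 3) ⊕ (Fin 3 ⊕ Fin 1)) ((Fin 3 ⊕ Fin 3) ⊕ (Fin 3 ⊕ Fin 1)) ℝ)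
              + (ε * T) • Ao T).map (algebraMap ℝ ℂ)),
          ‖μ‖ < 1)
        ∧ ∃ c ρ : ℝ, 1 ≤ c ∧ 0 < ρ ∧ ρ < 1 ∧
            ∀ (z : EuclideanSpace ℝ ((Fin 3 ⊕ Fin 3) ⊕ (Fin 3 ⊕ Fin 1))) (k : ℕ),
              ‖Matrix.toEuclideanCLM (𝕜 := ℝ)
                  (((1 : Matrix ((Fin 3 ⊕ Fin 3) ⊕ (Fin 3 ⊕ Fin 1)) ((Fin 3 ⊕ Fin 3) ⊕ (Fin 3 ⊕ Fin 1)) ℝ)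
                    + (ε * T) • Ao T) ^ k) z‖
                ≤ c * ρ ^ k * ‖z‖ := by
  subst hL0
  obtain rfl : Ao = fun T => averagedClosedLoop (Fin 1) J (L T) k₁ k₂ (α * lam) :=
    funext fun T => by simp only [hAo, averagedClosedLoop, mul_assoc]
  exact averaged_output_feedback_stability_general (Fin 1) hJ hL₀ hLcont hk₁ hk₂ (mul_pos hα hlam)
end
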